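/- Let W be a discrete memoryless channel with R_cr < C and let R ∈ (R_cr, C). Define ρ*_R := max{ |ρ| : ρ ∈ ∂E_r(R) }, where ∂E_r(R) is the subdifferential of E_r(·) at R. Suppose there exists Q ∈ P(𝒳) with E_r(R,Q) = E_r(R), the pair (Q,W) nonsingular, and −∂E_r(a,Q)/∂a|_{a=R} = ρ*_R. Then there exists a constant K₅ > 0, depending only on W, R and Q, such that for every positive integer N there exists an (N,R) code (f,φ) with maximal error probability P_e(f,φ) ≤ K₅ · N^{−(1+ρ*_R)/2} · e^{−N·E_r(R)}. -/

import Mathlib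

open Real BigOperators
open scoped Classical

namespace RCB

/-- A probability distribution on a finite alphabet. -/
def IsDist {α : Type*} [Fintype α] (Q : α → ℝ) : Prop :=
  (∀ a, 0 ≤ Q a) ∧ ∑ a, Q a = 1

/-- A discrete memoryless channel, i.e. a stochastic matrix from `X` to `Y`. -/
def IsChannel {X Y : Type*} [Fintype X] [Fintype Y] (W : X → Y → ℝ) : Prop :=
  (∀ x y, 0 ≤ W x y) ∧ ∀ x, ∑ y, W x y = 1

/-- The Gallager function `E_o(ρ, Q)`. -/
noncomputable def Eo {X Y : Type*} [Fintype X] [Fintype Y]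
    (W : X → Y → ℝ) (ρ : ℝ) (Q : X → ℝ) : ℝ :=
  - Real.log (∑ y, (∑ x, Q x * W x y ^ (1 / (1 + ρ))) ^ (1 + ρ))

/-- The random coding exponent `E_r(R, Q)` for input distribution `Q`. -/
noncomputable def ErQ {X Y : Type*} [Fintype X] [Fintype Y]
    (W : X → Y → ℝ) (R : ℝ) (Q : X → ℝ) : ℝ :=
  sSup ((fun ρ => -ρ * R + Eo W ρ Q) '' Set.Icc (0 : ℝ) 1)

/-- The random coding exponent `E_r(R)`. -/
noncomputable def Er {X Y : Type*} [Fintype X] [Fintype Y]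
    (W : X → Y → ℝ) (R : ℝ) : ℝ :=
  sSup {v : ℝ | ∃ Q : X → ℝ, IsDist Q ∧ v = ErQ W R Q}

/-- The mutual information `I(Q; W)` (natural logarithm). -/
noncomputable def MI {X Y : Type*} [Fintype X] [Fintype Y]
    (W : X → Y → ℝ) (Q : X → ℝ) : ℝ :=
  ∑ x, ∑ y, Q x * W x y * Real.log (W x y / ∑ x', Q x' * W x' y)

/-- The capacity `C = max_Q I(Q;W)`. -/
noncomputable def Capacity {X Y : Type*} [Fintype X] [Fintype Y]
    (W : X → Y → ℝ) : ℝ :=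
  sSup {v : ℝ | ∃ Q : X → ℝ, IsDist Q ∧ v = MI W Q}

/-- The critical rate of the input distribution `Q`:
`R_cr(Q) = ∂E_o(ρ,Q)/∂ρ |_{ρ=1}`. -/
noncomputable def RcrQ {X Y : Type*} [Fintype X] [Fintype Y]
    (W : X → Y → ℝ) (Q : X → ℝ) : ℝ :=
  deriv (fun ρ => Eo W ρ Q) 1

/-- The critical rate of the channel: the largest `R` with
`E_r(R) = -R + max_Q E_o(1,Q)`. -/
noncomputable def Rcr {X Y : Type*} [Fintype X] [Fintype Y]
    (W : X → Y → ℝ) : ℝ :=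
  sSup {R : ℝ | Er W R = -R + sSup {v : ℝ | ∃ Q : X → ℝ, IsDist Q ∧ v = Eo W 1 Q}}

/-- The rate `R_∞ = inf {R ≥ 0 : E_SP(R) < ∞}` (finiteness of the
sphere-packing exponent expressed as boundedness of the family of affine maps). -/
noncomputable def Rinf {X Y : Type*} [Fintype X] [Fintype Y]
    (W : X → Y → ℝ) : ℝ :=
  sInf {R : ℝ | 0 ≤ R ∧
    BddAbove {v : ℝ | ∃ (Q : X → ℝ) (ρ : ℝ), IsDist Q ∧ 0 ≤ ρ ∧ v = -ρ * R + Eo W ρ Q}}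

/-- The pair `(Q, W)` is singular if `W(y|x) = W(y|z)` whenever
`Q(x)W(y|x)Q(z)W(y|z) > 0`. -/
def Singular {X Y : Type*} (W : X → Y → ℝ) (Q : X → ℝ) : Prop :=
  ∀ x y z, 0 < Q x * W x y * (Q z * W z y) → W x y = W z y

/-- `ρ^*_R(Q) = -∂E_r(a,Q)/∂a |_{a=R}`. -/
noncomputable def rhoStarQ {X Y : Type*} [Fintype X] [Fintype Y]
    (W : X → Y → ℝ) (Q : X → ℝ) (R : ℝ) : ℝ :=
  - deriv (fun a => ErQ W a Q) R

/-- The number of messages of an `(N, R)` code: `⌈exp (N R)⌉`. -/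
noncomputable def nMsgs (N : ℕ) (R : ℝ) : ℕ := ⌈Real.exp (N * R)⌉₊

/-- The `N`-fold memoryless extension of the channel `W`. -/
noncomputable def Wn {X Y : Type*} (W : X → Y → ℝ) {N : ℕ}
    (c : Fin N → X) (y : Fin N → Y) : ℝ :=
  ∏ n, W (c n) (y n)

/-- The maximal error probability of the code `(f, φ)` over the `N`-fold
memoryless extension of `W`. -/
noncomputable def Pmax {X Y : Type*} [Fintype X] [Fintype Y] {M N : ℕ}
    (W : X → Y → ℝ) (f : Fin M → Fin N → X) (φ : (Fin N → Y) → Fin M) : ℝ :=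
  ⨆ m : Fin M, ∑ y : Fin N → Y, Wn W (f m) y * (if φ y ≠ m then (1 : ℝ) else 0)

/-- The ensemble average error probability `P̄_e(Q, N, R)`: the `⌈exp (N R)⌉`
codewords are drawn i.i.d. from `Q^N` and decoded by maximum-likelihood
decoding, ties counted as errors. -/
noncomputable def Pbar {X Y : Type*} [Fintype X] [Fintype Y]
    (W : X → Y → ℝ) (Q : X → ℝ) (N : ℕ) (R : ℝ) : ℝ :=
  ∑ c : Fin (nMsgs N R) → Fin N → X,
    (∏ m, ∏ n, Q (c m n)) *
      ((nMsgs N R : ℝ)⁻¹ *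
        ∑ m, ∑ y : Fin N → Y,
          Wn W (c m) y *
            (if ∃ m', m' ≠ m ∧ Wn W (c m) y ≤ Wn W (c m') y then (1 : ℝ) else 0))

/-- The tilted output distribution `f_ρ`. -/
noncomputable def fRho {X Y : Type*} [Fintype X] [Fintype Y]
    (W : X → Y → ℝ) (Q : X → ℝ) (ρ : ℝ) (y : Y) : ℝ :=
  (∑ x, Q x * W x y ^ (1 / (1 + ρ))) ^ (1 + ρ) /
    ∑ b, (∑ a, Q a * W a b ^ (1 / (1 + ρ))) ^ (1 + ρ)

/-- The cumulant generating function
`Λ_ρ(λ) = log E_{P_{X,Y}}[exp(λ log (f_ρ(Y)/W(Y|X)))]` with `P_{X,Y} = Q × W`. -/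
noncomputable def Lam {X Y : Type*} [Fintype X] [Fintype Y]
    (W : X → Y → ℝ) (Q : X → ℝ) (ρ : ℝ) (t : ℝ) : ℝ :=
  Real.log (∑ x, ∑ y, Q x * W x y * Real.exp (t * Real.log (fRho W Q ρ y / W x y)))

/-- `P_{X,Y,Z}(S̃_Q)` where `P_{X,Y,Z}(x,y,z) = Q(x)W(y|x)Q(z)` and
`S̃_Q = {(x,y,z) : Q(x)W(y|x)Q(z)W(y|z) > 0}`. -/
noncomputable def PStilde {X Y : Type*} [Fintype X] [Fintype Y]
    (W : X → Y → ℝ) (Q : X → ℝ) : ℝ :=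
  ∑ x, ∑ y, ∑ z,
    if 0 < Q x * W x y * (Q z * W z y) then Q x * W x y * Q z else 0

/-- The bivariate cumulant generating function `Λ_{1,ρ}(v)` with respect to the
conditional distribution `P̃_{X,Y,Z}` of `P_{X,Y,Z}` given `S̃_Q`. -/
noncomputable def Lam1 {X Y : Type*} [Fintype X] [Fintype Y]
    (W : X → Y → ℝ) (Q : X → ℝ) (ρ : ℝ) (v : ℝ × ℝ) : ℝ :=
  Real.log ((∑ x, ∑ y, ∑ z,
    if 0 < Q x * W x y * (Q z * W z y) then
      Q x * W x y * Q z *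
        Real.exp (v.1 * Real.log (W x y / fRho W Q ρ y) +
          v.2 * Real.log (W z y / W x y))
    else 0) / PStilde W Q)

/-- The subdifferential of `f : ℝ → ℝ` at `R` (for convex `f`). -/
def Subderiv (f : ℝ → ℝ) (R : ℝ) : Set ℝ :=
  {g : ℝ | ∀ x, f R + g * (x - R) ≤ f x}

/-- The tilted backward channel `P^ρ_{X|Y}`. -/
noncomputable def PXgY {X Y : Type*} [Fintype X]
    (W : X → Y → ℝ) (Q : X → ℝ) (ρ : ℝ) (x : X) (y : Y) : ℝ :=
  Q x * W x y ^ (1 / (1 + ρ)) / ∑ a, Q a * W a y ^ (1 / (1 + ρ))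

/-- The tilted joint distribution `P^ρ_{X,Y}(x,y) = P^ρ_{X|Y}(x|y) P^ρ_Y(y)`. -/
noncomputable def PXY {X Y : Type*} [Fintype X] [Fintype Y]
    (W : X → Y → ℝ) (Q : X → ℝ) (ρ : ℝ) (x : X) (y : Y) : ℝ :=
  PXgY W Q ρ x y * fRho W Q ρ y

theorem summable_exp_neg_abs_int {c : ℝ} (hc : 0 < c) :
    Summable (fun k : ℤ => Real.exp (-c * |(k : ℝ)|)) := by
  have h : Summable (fun n : ℕ => Real.exp (-c * (n : ℝ))) := by
    have := Real.summable_exp_nat_mul_iff.mpr (neg_lt_zero.mpr hc)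
    simpa [mul_comm] using this
  refine Summable.of_nat_of_neg ?_ ?_ <;> simpa using h

/-- The two-sided geometric series `∑ₖ exp (-c |k|)`. -/
noncomputable def expSum (c : ℝ) : ℝ := ∑' k : ℤ, Real.exp (-c * |(k : ℝ)|)

theorem sum_exp_neg_abs_le {c : ℝ} (hc : 0 < c) (s : Finset ℤ) :
    ∑ k ∈ s, Real.exp (-c * |(k : ℝ)|) ≤ expSum c :=
  (summable_exp_neg_abs_int hc).sum_le_tsum s (fun _ _ => (Real.exp_pos _).le)

theorem expSum_pos {c : ℝ} (hc : 0 < c) : 0 < expSum c := by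
  have := sum_exp_neg_abs_le hc {0}
  simp at this
  linarith

/-- A law whose mass on unit intervals is at most `D` integrates two-sided exponentials
to `O(D)`. -/
theorem sum_exp_abs_le_of_concentration {ι : Type*} [Fintype ι] {p V : ι → ℝ}
    {D κ : ℝ} (hκ : 0 < κ)
    (hp : ∀ x, 0 ≤ p x)
    (hD : ∀ a : ℝ, ∑ x, (if a ≤ V x ∧ V x ≤ a + 1 then p x else 0) ≤ D) (b : ℝ) :
    ∑ x, p x * Real.exp (-κ * |V x - b|) ≤ D * (Real.exp κ * expSum κ) := by
  have hD0 : 0 ≤ D := le_trans (Finset.sum_nonneg fun x _ => by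
    split_ifs
    · exact hp x
    · exact le_rfl) (hD 0)
  let g : ι → ℤ := fun x => ⌊V x - b⌋
  rw [← Finset.sum_fiberwise_of_maps_to (t := Finset.univ.image g) (g := g)
    (fun x _ => Finset.mem_image_of_mem _ (Finset.mem_univ x))]
  calc _ ≤ ∑ k ∈ Finset.univ.image g, D * (Real.exp κ * Real.exp (-κ * |(k : ℝ)|)) := by
        refine Finset.sum_le_sum fun k _ => ?_
        calc _ ≤ ∑ x with g x = k, p x * (Real.exp κ * Real.exp (-κ * |(k : ℝ)|)) := by
              refine Finset.sum_le_sum fun x hx => ?_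
              have hx' : ⌊V x - b⌋ = k := (Finset.mem_filter.mp hx).2
              have h1 := Int.floor_le (V x - b)
              have h2 := Int.lt_floor_add_one (V x - b)
              rw [hx'] at h1 h2
              refine mul_le_mul_of_nonneg_left ?_ (hp x)
              rw [← Real.exp_add]
              refine Real.exp_le_exp.mpr ?_
              have : |(k : ℝ)| ≤ |V x - b| + 1 := by
                have : |(k : ℝ)| ≤ |V x - b| + |(k : ℝ) - (V x - b)| := by
                  have := abs_add_le (V x - b) ((k : ℝ) - (V x - b))
                  simpa using this
                have h3 : |(k : ℝ) - (V x - b)| ≤ 1 := by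
                  rw [abs_le]; constructor <;> linarith
                linarith
              nlinarith
          _ = (∑ x with g x = k, p x) * (Real.exp κ * Real.exp (-κ * |(k : ℝ)|)) := by
              rw [Finset.sum_mul]
          _ ≤ _ := by
              refine mul_le_mul_of_nonneg_right ?_ (by positivity)
              refine le_trans ?_ (hD (b + k))
              rw [Finset.sum_filter]
              refine Finset.sum_le_sum fun x _ => ?_
              by_cases hx : g x = k
              · have hx' : ⌊V x - b⌋ = k := hx
                have h1 := Int.floor_le (V x - b)
                have h2 := Int.lt_floor_add_one (V x - b)
                rw [hx'] at h1 h2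
                rw [if_pos hx, if_pos ⟨by linarith, by linarith⟩]
              · rw [if_neg hx]
                split_ifs
                · exact hp x
                · exact le_rfl
    _ = D * (Real.exp κ * ∑ k ∈ Finset.univ.image g, Real.exp (-κ * |(k : ℝ)|)) := by
        rw [← Finset.mul_sum, ← Finset.mul_sum]
    _ ≤ _ := by
        gcongr
        exact sum_exp_neg_abs_le hκ _

theorem norm_sum_mul_exp_le_exp {X : Type*} [Fintype X] {p v : X → ℝ} (hp : ∀ x, 0 ≤ p x)
    (hp1 : ∑ x, p x = 1) {x₁ x₂ : X} (hne : x₁ ≠ x₂) {q t : ℝ}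
    (hq1 : q ≤ p x₁) (hq2 : q ≤ p x₂) (hq : 0 ≤ q)
    (ht : |t * (v x₁ - v x₂)| ≤ π) :
    ‖∑ x, (p x : ℂ) * Complex.exp ((t * v x : ℝ) * Complex.I)‖ ≤
      Real.exp (-(q * (v x₁ - v x₂) ^ 2 / π ^ 2) * t ^ 2) := by
  let r : X → ℝ := fun x => (if x = x₁ then q else 0) + (if x = x₂ then q else 0)
  have hr : ∀ x, r x ≤ p x := by
    intro x
    by_cases h1 : x = x₁
    · subst h1; simp [r, hne, hq1]
    · by_cases h2 : x = x₂
      · subst h2; simp [r, h1, hq2]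
      · simp [r, h1, h2, hp x]
  have hrs : ∑ x, r x = 2 * q := by
    simp [r, Finset.sum_add_distrib]; ring
  have hsplit : ∑ x, (p x : ℂ) * Complex.exp ((t * v x : ℝ) * Complex.I) =
      ∑ x, ((p x - r x : ℝ) : ℂ) * Complex.exp ((t * v x : ℝ) * Complex.I) +
      q * (Complex.exp ((t * v x₁ : ℝ) * Complex.I) + Complex.exp ((t * v x₂ : ℝ) * Complex.I)) := by
    have : (q : ℂ) * (Complex.exp ((t * v x₁ : ℝ) * Complex.I) +
        Complex.exp ((t * v x₂ : ℝ) * Complex.I)) =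
        ∑ x, (r x : ℂ) * Complex.exp ((t * v x : ℝ) * Complex.I) := by
      simp only [r, Complex.ofReal_add, add_mul, Finset.sum_add_distrib, mul_add]
      congr 1 <;> simp [apply_ite Complex.ofReal, ite_mul]
    rw [this, ← Finset.sum_add_distrib]
    refine Finset.sum_congr rfl fun x _ => ?_
    push_cast; ring
  have hpair : ‖Complex.exp ((t * v x₁ : ℝ) * Complex.I) + Complex.exp ((t * v x₂ : ℝ) * Complex.I)‖
      = 2 * Real.cos (t * (v x₁ - v x₂) / 2) := by
    have : Complex.exp ((t * v x₁ : ℝ) * Complex.I) + Complex.exp ((t * v x₂ : ℝ) * Complex.I) =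
        Complex.exp ((t * (v x₁ + v x₂) / 2 : ℝ) * Complex.I) *
          ((2 * Real.cos (t * (v x₁ - v x₂) / 2) : ℝ) : ℂ) := by
      push_cast
      rw [Complex.cos, mul_div_cancel₀ _ (two_ne_zero), mul_add, ← Complex.exp_add,
        ← Complex.exp_add]
      congr 2 <;> ring
    rw [this, norm_mul, Complex.norm_exp_ofReal_mul_I, one_mul, Complex.norm_real,
      Real.norm_of_nonneg]
    have := abs_le.mp ht
    have := Real.cos_nonneg_of_neg_pi_div_two_le_of_le (x := t * (v x₁ - v x₂) / 2)
      (by linarith) (by linarith)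
    linarith
  have hcos : Real.cos (t * (v x₁ - v x₂) / 2) ≤
      1 - 2 / π ^ 2 * (t * (v x₁ - v x₂) / 2) ^ 2 := by
    refine Real.cos_le_one_sub_mul_cos_sq ?_
    rw [abs_div, abs_of_pos (two_pos : (0 : ℝ) < 2)]
    linarith [abs_nonneg (t * (v x₁ - v x₂))]
  rw [hsplit]
  calc _ ≤ ∑ x, (p x - r x) + q * (2 * Real.cos (t * (v x₁ - v x₂) / 2)) := by
        refine (norm_add_le _ _).trans (add_le_add ?_ ?_)
        · refine (norm_sum_le _ _).trans (Finset.sum_le_sum fun x _ => ?_)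
          rw [norm_mul, Complex.norm_exp_ofReal_mul_I, mul_one, Complex.norm_real,
            Real.norm_of_nonneg (sub_nonneg.mpr (hr x))]
        · rw [norm_mul, hpair, Complex.norm_real, Real.norm_of_nonneg hq]
    _ ≤ -(q * (v x₁ - v x₂) ^ 2 / π ^ 2) * t ^ 2 + 1 := by
        rw [Finset.sum_sub_distrib, hp1, hrs]
        have := mul_le_mul_of_nonneg_left hcos hq
        have e : -(q * (v x₁ - v x₂) ^ 2 / π ^ 2) * t ^ 2 =
          2 * (q * -(2 / π ^ 2 * (t * (v x₁ - v x₂) / 2) ^ 2)) := by ring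
        rw [e]; linarith
    _ ≤ _ := Real.add_one_le_exp _

theorem sum_sum_exp_sq_le {c : ℝ} (hc : 0 < c) (m : ℕ) :
    ∑ j ∈ Finset.range m, ∑ k ∈ Finset.range m, Real.exp (-c * ((j : ℝ) - k) ^ 2) ≤
      m * expSum c := by
  have h : ∀ j ∈ Finset.range m,
      ∑ k ∈ Finset.range m, Real.exp (-c * ((j : ℝ) - k) ^ 2) ≤ expSum c := by
    intro j _
    have hinj : Set.InjOn (fun k : ℕ => (j : ℤ) - k) (Finset.range m : Set ℕ) := by
      intro a _ b _ h
      simpa using h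
    refine le_trans ?_ (sum_exp_neg_abs_le hc ((Finset.range m).image fun k : ℕ => (j : ℤ) - k))
    rw [Finset.sum_image hinj]
    refine Finset.sum_le_sum fun k _ => Real.exp_le_exp.mpr ?_
    have h1 : |(((j : ℤ) - k : ℤ) : ℝ)| ≤ ((j : ℝ) - k) ^ 2 := by
      have : |((j : ℤ) - k)| ≤ ((j : ℤ) - k) ^ 2 := by
        rw [Int.abs_eq_natAbs]
        exact Int.natAbs_le_self_sq _
      exact_mod_cast this
    nlinarith
  simpa using Finset.sum_le_card_nsmul _ _ _ h

theorem concentration_of_charFun {ι : Type*} [Fintype ι] {p V : ι → ℝ} (hp : ∀ x, 0 ≤ p x)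
    {c δ : ℝ} (hc : 0 < c) (hδ : 0 < δ) (hδ1 : δ ≤ 1) (n : ℕ)
    (h : ∀ t : ℝ, |t| ≤ δ →
      ‖∑ x, (p x : ℂ) * Complex.exp ((t * V x : ℝ) * Complex.I)‖ ≤ Real.exp (-c * t ^ 2 * n))
    (a : ℝ) :
    ∑ x, (if a ≤ V x ∧ V x ≤ a + 1 then p x else 0) ≤
      4 * Real.exp (c * δ ^ 2) * expSum (c * δ ^ 2 / 4) / √((n : ℝ) + 1) := by
  obtain ⟨m, hm⟩ : ∃ m : ℕ, m = Nat.sqrt n + 1 := ⟨_, rfl⟩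
  have hm1 : n + 1 ≤ m * m := by rw [hm]; exact Nat.lt_succ_sqrt n
  have hm2 : m * m ≤ 4 * (n + 1) := by
    have := Nat.sqrt_le n
    have := Nat.sqrt_le_self n
    rw [hm]; nlinarith
  have hm0 : (0 : ℝ) < m := by rw [hm]; positivity
  have hm1' : (n : ℝ) + 1 ≤ m * m := by exact_mod_cast hm1
  have hm2' : (m : ℝ) * m ≤ 4 * (n + 1) := by exact_mod_cast hm2
  let e : ℝ → ℂ := fun u => Complex.exp ((u : ℝ) * Complex.I)
  let k : ι → ℂ := fun x => ∑ j ∈ Finset.range m, e (j * δ / m * (V x - a))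
  have hk : ∀ x, a ≤ V x ∧ V x ≤ a + 1 → (m : ℝ) ^ 2 ≤ 4 * ‖k x‖ ^ 2 := by
    rintro x ⟨h1, h2⟩
    have hre : (m : ℝ) / 2 ≤ (k x).re := by
      have : (m : ℝ) / 2 = ∑ j ∈ Finset.range m, (1 / 2 : ℝ) := by simp; ring
      rw [this, Complex.re_sum]
      refine Finset.sum_le_sum fun j hj => ?_
      have hj : (j : ℝ) ≤ m := by exact_mod_cast (Finset.mem_range.mp hj).le
      simp only [e, Complex.exp_ofReal_mul_I_re]
      refine le_trans ?_ (Real.one_sub_sq_div_two_le_cos)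
      have h3 : (j : ℝ) * δ / m ≤ 1 := by
        rw [div_le_one hm0]; nlinarith [Nat.cast_nonneg (α := ℝ) j]
      have h4 : 0 ≤ (j : ℝ) * δ / m := by positivity
      have h5 : 0 ≤ (j : ℝ) * δ / m * (V x - a) := mul_nonneg h4 (by linarith)
      have h6 : (j : ℝ) * δ / m * (V x - a) ≤ 1 :=
        mul_le_one₀ h3 (by linarith) (by linarith)
      nlinarith
    have := (hre.trans (Complex.re_le_norm _))
    nlinarith
  have hexp : ((∑ x, p x * ‖k x‖ ^ 2 : ℝ) : ℂ) = ∑ i ∈ Finset.range m, ∑ j ∈ Finset.range m,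
      e (-((i - j) * δ / m * a)) *
        ∑ x, (p x : ℂ) * Complex.exp ((((i - j) * δ / m : ℝ) * V x : ℝ) * Complex.I) := by
    have h1 : ∀ x, ((‖k x‖ ^ 2 : ℝ) : ℂ) = ∑ i ∈ Finset.range m, ∑ j ∈ Finset.range m,
      e (-((i - j) * δ / m * a)) *
        Complex.exp ((((i - j) * δ / m : ℝ) * V x : ℝ) * Complex.I) := by
      intro x
      push_cast
      rw [← Complex.mul_conj', map_sum, Finset.sum_mul_sum]
      refine Finset.sum_congr rfl fun i _ => Finset.sum_congr rfl fun j _ => ?_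
      simp only [e, ← Complex.exp_conj, map_mul, Complex.conj_ofReal, Complex.conj_I,
        ← Complex.exp_add]
      congr 1
      push_cast
      ring
    simp_rw [Finset.mul_sum]
    push_cast at h1 ⊢
    simp_rw [h1, Finset.mul_sum]
    rw [Finset.sum_comm]
    refine Finset.sum_congr rfl fun i _ => ?_
    rw [Finset.sum_comm]
    refine Finset.sum_congr rfl fun j _ => Finset.sum_congr rfl fun x _ => ?_
    ring
  have hbd : ∑ x, p x * ‖k x‖ ^ 2 ≤
      Real.exp (c * δ ^ 2) * (m * expSum (c * δ ^ 2 / 4)) := by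
    have h0 : 0 ≤ ∑ x, p x * ‖k x‖ ^ 2 :=
      Finset.sum_nonneg fun x _ => mul_nonneg (hp x) (by positivity)
    rw [← Real.norm_of_nonneg h0, ← Complex.norm_real, hexp]
    refine le_trans ?_ (mul_le_mul_of_nonneg_left
      (sum_sum_exp_sq_le (c := c * δ ^ 2 / 4) (by positivity) m) (Real.exp_pos _).le)
    rw [Finset.mul_sum]
    refine (norm_sum_le _ _).trans (Finset.sum_le_sum fun i hi => ?_)
    rw [Finset.mul_sum]
    refine (norm_sum_le _ _).trans (Finset.sum_le_sum fun j hj => ?_)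
    have hi : (i : ℝ) ≤ m := by exact_mod_cast (Finset.mem_range.mp hi).le
    have hj : (j : ℝ) ≤ m := by exact_mod_cast (Finset.mem_range.mp hj).le
    have hi0 := Nat.cast_nonneg (α := ℝ) i
    have hj0 := Nat.cast_nonneg (α := ℝ) j
    have hij : |((i : ℝ) - j)| ≤ m := by rw [abs_le]; constructor <;> linarith
    rw [norm_mul, Complex.norm_exp_ofReal_mul_I, one_mul]
    have ht : |((i : ℝ) - j) * δ / m| ≤ δ := by
      rw [abs_div, abs_mul, abs_of_pos hδ, abs_of_pos hm0, div_le_iff₀ hm0, mul_comm]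
      exact mul_le_mul_of_nonneg_left hij hδ.le
    refine (h _ ht).trans ?_
    rw [← Real.exp_add]
    refine Real.exp_le_exp.mpr ?_
    set t := ((i : ℝ) - j) * δ / m with htdef
    have ht2 : t ^ 2 ≤ δ ^ 2 := by
      rw [← sq_abs t]; exact pow_le_pow_left₀ (abs_nonneg _) ht 2
    have h3 : (((i : ℝ) - j) * δ) ^ 2 = t ^ 2 * (m * m) := by
      rw [htdef]; field_simp
    have h4 : t ^ 2 * (m * m) ≤ t ^ 2 * (4 * (n + 1)) :=
      mul_le_mul_of_nonneg_left hm2' (sq_nonneg _)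
    have h5 : -(c * δ ^ 2 / 4) * ((i : ℝ) - j) ^ 2 = -(c / 4) * (t ^ 2 * (m * m)) := by
      rw [← h3]; ring
    rw [h5]
    nlinarith
  have hmain : (∑ x, (if a ≤ V x ∧ V x ≤ a + 1 then p x else 0)) * (m : ℝ) ^ 2 ≤
      4 * (Real.exp (c * δ ^ 2) * (m * expSum (c * δ ^ 2 / 4))) := by
    refine le_trans ?_ (mul_le_mul_of_nonneg_left hbd (by norm_num))
    rw [Finset.sum_mul, Finset.mul_sum]
    refine Finset.sum_le_sum fun x _ => ?_
    split_ifs with hx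
    · have := mul_le_mul_of_nonneg_left (hk x hx) (hp x)
      linarith
    · have := mul_nonneg (hp x) (sq_nonneg ‖k x‖)
      linarith
  have hs : √((n : ℝ) + 1) ≤ m := by
    rw [Real.sqrt_le_left hm0.le]; linarith
  have hZ := expSum_pos (c := c * δ ^ 2 / 4) (by positivity)
  rw [le_div_iff₀ (by positivity)]
  set P := ∑ x, (if a ≤ V x ∧ V x ≤ a + 1 then p x else 0)
  have hP : 0 ≤ P := Finset.sum_nonneg fun x _ => by
    split_ifs
    · exact hp x
    · exact le_rfl
  refine (mul_le_mul_of_nonneg_left hs hP).trans ?_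
  have : (P * m) * m ≤ (4 * Real.exp (c * δ ^ 2) * expSum (c * δ ^ 2 / 4)) * m := by linarith
  exact le_of_mul_le_mul_right this hm0

theorem sum_prod_pi {X : Type*} [Fintype X] {N : ℕ} {R : Type*} [CommSemiring R]
    (f : Fin N → X → R) :
    ∑ x : Fin N → X, ∏ n, f n (x n) = ∏ n, ∑ a, f n a := by
  rw [Finset.prod_univ_sum, Fintype.piFinset_univ]

theorem sum_insertNth {A : Type*} [Fintype A] {k : ℕ} (m : Fin (k + 1))
    (F : (Fin (k + 1) → A) → ℝ) :
    ∑ c, F c = ∑ a, ∑ r : Fin k → A, F (m.insertNth a r) := by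
  rw [← (Fin.insertNthEquiv (fun _ => A) m).sum_comp, Fintype.sum_prod_type]
  rfl

/-- The number of occurrences of `b` in the sequence `y`. -/
noncomputable def count {Y : Type*} {N : ℕ} (b : Y) (y : Fin N → Y) : ℕ :=
  ∑ n, if y n = b then 1 else 0

theorem sum_prod_mul_inv_count_le {Y : Type*} [Fintype Y] {f : Y → ℝ} (hf : ∀ y, 0 ≤ f y)
    (hf1 : ∑ y, f y = 1) {b : Y} (hb : 0 < f b) (N : ℕ) :
    ∑ y : Fin N → Y, (∏ n, f (y n)) * ((count b y : ℝ) + 1)⁻¹ ≤ ((N + 1) * f b)⁻¹ := by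
  set E := ∑ y : Fin N → Y, (∏ n, f (y n)) * ((count b y : ℝ) + 1)⁻¹
  have h1 : ∀ j : Fin (N + 1), ∑ y : Fin (N + 1) → Y, (∏ n, f (y n)) *
      ((if y j = b then 1 else 0) * (count b y : ℝ)⁻¹) = f b * E := by
    intro j
    rw [sum_insertNth j, Finset.sum_eq_single b]
    · rw [Finset.mul_sum]
      refine Finset.sum_congr rfl fun r _ => ?_
      rw [Fin.prod_univ_succAbove _ j, count, Fin.sum_univ_succAbove _ j]
      simp only [Fin.insertNth_apply_same, Fin.insertNth_apply_succAbove, if_true]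
      rw [count, Nat.cast_add, Nat.cast_one, add_comm, one_mul, mul_assoc]
    · intro a _ ha
      simp [ha]
    · simp
  have h2 : ((N : ℝ) + 1) * (f b * E) ≤ 1 := by
    calc ((N : ℝ) + 1) * (f b * E) = ∑ j : Fin (N + 1), f b * E := by simp
      _ = ∑ y : Fin (N + 1) → Y, (∏ n, f (y n)) * ((count b y : ℝ) * (count b y : ℝ)⁻¹) := by
        rw [Finset.sum_congr rfl fun j _ => (h1 j).symm, Finset.sum_comm]
        refine Finset.sum_congr rfl fun y _ => ?_
        rw [← Finset.mul_sum, ← Finset.sum_mul, count]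
        push_cast
        rfl
      _ ≤ ∑ y : Fin (N + 1) → Y, ∏ n, f (y n) := by
        refine Finset.sum_le_sum fun y _ => ?_
        exact mul_le_of_le_one_right (Finset.prod_nonneg fun n _ => hf _) mul_inv_le_one
      _ = 1 := by
        rw [sum_prod_pi (fun _ => f)]
        simp [hf1]
  rw [← one_div, le_div_iff₀ (by positivity)]
  linarith

theorem sum_prod_mul_count_rpow_le {Y : Type*} [Fintype Y] {f : Y → ℝ} (hf : ∀ y, 0 ≤ f y)
    (hf1 : ∑ y, f y = 1) {b : Y} (hb : 0 < f b) (N : ℕ) {α : ℝ} (hα : 0 < α) (hα1 : α ≤ 1) :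
    ∑ y : Fin N → Y, (∏ n, f (y n)) * ((count b y : ℝ) + 1) ^ (-α) ≤
      ((N + 1) * f b) ^ (-α) := by
  have hw : ∀ y : Fin N → Y, 0 ≤ ∏ n, f (y n) := fun y => Finset.prod_nonneg fun n _ => hf _
  have hw1 : ∑ y : Fin N → Y, ∏ n, f (y n) = 1 := by
    rw [sum_prod_pi (fun _ => f)]
    simp [hf1]
  have h := Real.rpow_arith_mean_le_arith_mean_rpow Finset.univ
    (fun y : Fin N → Y => ∏ n, f (y n)) (fun y => ((count b y : ℝ) + 1) ^ (-α))
    (fun y _ => hw y) hw1 (fun y _ => by positivity) (p := 1 / α) (by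
      rw [le_div_iff₀ hα]; linarith)
  have h2 : ∀ y : Fin N → Y, (((count b y : ℝ) + 1) ^ (-α)) ^ (1 / α) =
      ((count b y : ℝ) + 1)⁻¹ := by
    intro y
    rw [← Real.rpow_mul (by positivity), neg_mul, mul_one_div_cancel hα.ne', Real.rpow_neg_one]
  simp_rw [h2] at h
  have h3 := h.trans (sum_prod_mul_inv_count_le hf hf1 hb N)
  have h0 : 0 ≤ ∑ y : Fin N → Y, (∏ n, f (y n)) * ((count b y : ℝ) + 1) ^ (-α) :=
    Finset.sum_nonneg fun y _ => mul_nonneg (hw y) (by positivity)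
  have h4 := Real.rpow_le_rpow (by positivity) h3 hα.le
  rwa [← Real.rpow_mul h0, one_div_mul_cancel hα.ne', Real.rpow_one,
    Real.inv_rpow (by positivity), ← Real.rpow_neg (by positivity)] at h4

theorem sum_prod_mul_apply {A : Type*} [Fintype A] {P : A → ℝ} (hP1 : ∑ a, P a = 1)
    {k : ℕ} (j : Fin k) (g : A → ℝ) :
    ∑ r : Fin k → A, (∏ i, P (r i)) * g (r j) = ∑ a, P a * g a := by
  have h : ∀ r : Fin k → A, (∏ i, P (r i)) * g (r j) =
      ∏ i, (P (r i) * if i = j then g (r i) else 1) := by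
    intro r
    rw [Finset.prod_mul_distrib]
    simp
  simp_rw [h]
  rw [sum_prod_pi (fun i a => P a * if i = j then g a else 1),
    Finset.prod_eq_single j]
  · simp
  · intro i _ hi
    simp [hi, hP1]
  · simp

/-- The random coding union bound: some codebook of `k + 1` words has total error at most the
average over the random ensemble. -/
theorem exists_codebook_sum_error_le {A B : Type*} [Fintype A] [Nonempty A] [Fintype B]
    {P : A → ℝ} (hP : ∀ a, 0 ≤ P a) (hP1 : ∑ a, P a = 1) {U : A → B → ℝ}
    (hU : ∀ a b, 0 ≤ U a b) (k : ℕ) :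
    ∃ c : Fin (k + 1) → A,
      ∑ m, ∑ y, U (c m) y * (if ∃ m', m' ≠ m ∧ U (c m) y ≤ U (c m') y then 1 else 0) ≤
        (k + 1) * ∑ a, P a * ∑ y, U a y *
          min 1 (k * ∑ z, P z * if U a y ≤ U z y then 1 else 0) := by
  set F : (Fin (k + 1) → A) → ℝ := fun c =>
    ∑ m, ∑ y, U (c m) y * (if ∃ m', m' ≠ m ∧ U (c m) y ≤ U (c m') y then 1 else 0) with hF
  set ε := ∑ a, P a * ∑ y, U a y *
    min 1 (k * ∑ z, P z * if U a y ≤ U z y then 1 else 0) with hε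
  obtain ⟨c, hc⟩ := Finite.exists_min F
  refine ⟨c, ?_⟩
  have hw1 : ∀ k : ℕ, ∑ c : Fin k → A, ∏ m, P (c m) = 1 := fun k => by
    rw [sum_prod_pi (fun _ => P)]
    simp [hP1]
  have hex : ∀ (m : Fin (k + 1)) (a : A) (r : Fin k → A) (y : B),
      (∃ m', m' ≠ m ∧ U a y ≤ U ((m.insertNth a r : Fin (k + 1) → A) m') y) ↔
        ∃ j, U a y ≤ U (r j) y := by
    intro m a r y
    constructor
    · rintro ⟨m', hm, h⟩
      obtain ⟨j, rfl⟩ := Fin.exists_succAbove_eq hm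
      exact ⟨j, by simpa using h⟩
    · rintro ⟨j, h⟩
      exact ⟨m.succAbove j, Fin.succAbove_ne m j, by simpa using h⟩
  have hr : ∀ a y, ∑ r : Fin k → A, (∏ i, P (r i)) * (if ∃ j, U a y ≤ U (r j) y then 1 else 0) ≤
      min 1 (k * ∑ z, P z * if U a y ≤ U z y then 1 else 0) := by
    intro a y
    have hw : ∀ r : Fin k → A, 0 ≤ ∏ i, P (r i) := fun r => Finset.prod_nonneg fun i _ => hP _
    refine le_min ?_ ?_
    · refine le_trans ?_ (hw1 k).le
      refine Finset.sum_le_sum fun r _ => mul_le_of_le_one_right (hw r) ?_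
      split_ifs <;> norm_num
    · calc _ ≤ ∑ r : Fin k → A, (∏ i, P (r i)) *
              ∑ j, (if U a y ≤ U (r j) y then (1 : ℝ) else 0) := by
            refine Finset.sum_le_sum fun r _ => mul_le_mul_of_nonneg_left ?_ (hw r)
            have hn : ∀ j ∈ Finset.univ, (0 : ℝ) ≤ if U a y ≤ U (r j) y then (1 : ℝ) else 0 := by
              intro j _
              split_ifs <;> norm_num
            split_ifs with h
            · obtain ⟨j, hj⟩ := h
              have := Finset.single_le_sum hn (Finset.mem_univ j)
              rwa [if_pos hj] at this
            · exact Finset.sum_nonneg hn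
        _ = ∑ j : Fin k, ∑ z, P z * if U a y ≤ U z y then 1 else 0 := by
            simp_rw [Finset.mul_sum]
            rw [Finset.sum_comm]
            exact Finset.sum_congr rfl fun j _ =>
              sum_prod_mul_apply hP1 j (fun z => if U a y ≤ U z y then 1 else 0)
        _ = _ := by simp
  calc F c = ∑ c', (∏ m, P (c' m)) * F c := by rw [← Finset.sum_mul, hw1, one_mul]
    _ ≤ ∑ c', (∏ m, P (c' m)) * F c' := Finset.sum_le_sum fun c' _ =>
        mul_le_mul_of_nonneg_left (hc c') (Finset.prod_nonneg fun i _ => hP _)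
    _ = ∑ m : Fin (k + 1), ∑ c' : Fin (k + 1) → A, (∏ m, P (c' m)) *
          ∑ y, U (c' m) y * (if ∃ m', m' ≠ m ∧ U (c' m) y ≤ U (c' m') y then 1 else 0) := by
        simp only [hF]
        simp_rw [Finset.mul_sum (s := (Finset.univ : Finset (Fin (k + 1))))]
        rw [Finset.sum_comm]
    _ ≤ ∑ m : Fin (k + 1), ε := by
        refine Finset.sum_le_sum fun m _ => ?_
        rw [sum_insertNth m]
        refine Finset.sum_le_sum fun a _ => ?_
        simp only [Fin.prod_univ_succAbove _ m, Fin.insertNth_apply_same,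
          Fin.insertNth_apply_succAbove, hex]
        simp_rw [mul_assoc, ← Finset.mul_sum]
        refine mul_le_mul_of_nonneg_left ?_ (hP a)
        rw [Finset.sum_congr rfl fun r _ => Finset.mul_sum .., Finset.sum_comm]
        refine Finset.sum_le_sum fun y _ => ?_
        refine le_trans (le_of_eq ?_) (mul_le_mul_of_nonneg_left (hr a y) (hU a y))
        rw [Finset.mul_sum]
        exact Finset.sum_congr rfl fun r _ => by ring
    _ = (k + 1) * ε := by simp

theorem exists_code_maxError_le {X Y : Type*} [Fintype X] [Fintype Y]
    {W : X → Y → ℝ} (hW : ∀ x y, 0 ≤ W x y) {M N : ℕ} (hM : 0 < M) {ε : ℝ} (hε : 0 < ε)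
    (c : Fin (2 * M) → Fin N → X)
    (hc : ∑ m, ∑ y, Wn W (c m) y *
      (if ∃ m', m' ≠ m ∧ Wn W (c m) y ≤ Wn W (c m') y then (1 : ℝ) else 0) ≤ 2 * M * ε) :
    ∃ (f : Fin M → Fin N → X) (φ : (Fin N → Y) → Fin M), Pmax W f φ ≤ 2 * ε := by
  set e : Fin (2 * M) → ℝ := fun m => ∑ y, Wn W (c m) y *
      (if ∃ m', m' ≠ m ∧ Wn W (c m) y ≤ Wn W (c m') y then (1 : ℝ) else 0) with he
  have hWn : ∀ x y, 0 ≤ Wn W (N := N) x y := fun x y => Finset.prod_nonneg fun n _ => hW _ _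
  have he0 : ∀ m, 0 ≤ e m := fun m => Finset.sum_nonneg fun y _ =>
    mul_nonneg (hWn _ _) (by split_ifs <;> norm_num)
  set bad : Finset (Fin (2 * M)) := Finset.univ.filter fun m => 2 * ε < e m
  have hbad : bad.card ≤ M := by
    have h1 : bad.card • (2 * ε) ≤ ∑ m ∈ bad, e m :=
      Finset.card_nsmul_le_sum _ _ _ fun m hm => (Finset.mem_filter.mp hm).2.le
    have h2 : ∑ m ∈ bad, e m ≤ ∑ m, e m :=
      Finset.sum_le_sum_of_subset_of_nonneg (Finset.subset_univ _) fun m _ _ => he0 m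
    rw [nsmul_eq_mul] at h1
    have h3 : (bad.card : ℝ) * (2 * ε) ≤ M * (2 * ε) := by linarith
    exact_mod_cast le_of_mul_le_mul_right h3 (by positivity)
  have hgood : M ≤ badᶜ.card := by
    rw [Finset.card_compl, Fintype.card_fin]; omega
  let g : Fin M ↪ Fin (2 * M) :=
    (Fin.castLEEmb hgood).trans (badᶜ.orderEmbOfFin rfl).toEmbedding
  have hg : ∀ m, e (g m) ≤ 2 * ε := by
    intro m
    have : g m ∈ badᶜ := Finset.orderEmbOfFin_mem badᶜ rfl _
    simpa [bad] using this
  have : Nonempty (Fin M) := ⟨⟨0, hM⟩⟩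
  let φ : (Fin N → Y) → Fin M := fun y =>
    if h : ∃ m, ∀ m', m' ≠ m → Wn W (c (g m')) y < Wn W (c (g m)) y then h.choose
    else ⟨0, hM⟩
  refine ⟨fun m => c (g m), φ, ciSup_le fun m => le_trans ?_ (hg m)⟩
  refine Finset.sum_le_sum fun y _ => mul_le_mul_of_nonneg_left ?_ (hWn _ _)
  by_cases h : ∃ m', m' ≠ g m ∧ Wn W (c (g m)) y ≤ Wn W (c m') y
  · rw [if_pos h]
    split_ifs <;> norm_num
  · rw [if_neg h]
    push Not at h
    have h1 : ∀ m', m' ≠ m → Wn W (c (g m')) y < Wn W (c (g m)) y := fun m' hm =>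
      h _ fun hh => hm (g.injective hh)
    have hex : ∃ m, ∀ m', m' ≠ m → Wn W (c (g m')) y < Wn W (c (g m)) y := ⟨m, h1⟩
    have : φ y = m := by
      simp only [φ, dif_pos hex]
      by_contra hne
      exact lt_asymm (h1 _ hne) (hex.choose_spec m (Ne.symm hne))
    simp [this]

theorem exists_concentration {X Y : Type*} [Fintype X] {p v : Y → X → ℝ}
    (hp : ∀ y x, 0 ≤ p y x) {b : Y} {x₁ x₂ : X} (h1 : 0 < p b x₁) (h2 : 0 < p b x₂)
    (hv : v b x₁ ≠ v b x₂) :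
    ∃ D : ℝ, 0 < D ∧ ∀ (N : ℕ) (y : Fin N → Y), (∀ n, ∑ x, p (y n) x = 1) → ∀ a : ℝ,
      ∑ x : Fin N → X, (if a ≤ ∑ n, v (y n) (x n) ∧ ∑ n, v (y n) (x n) ≤ a + 1 then
        ∏ n, p (y n) (x n) else 0) ≤ D / √((count b y : ℝ) + 1) := by
  have hne : x₁ ≠ x₂ := fun h => hv (by rw [h])
  set d := v b x₁ - v b x₂ with hd
  have hd0 : d ≠ 0 := sub_ne_zero.mpr hv
  have hd1 : 0 < |d| := abs_pos.mpr hd0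
  set q := min (p b x₁) (p b x₂) with hq
  have hq0 : 0 < q := lt_min h1 h2
  set c := q * d ^ 2 / π ^ 2 with hc
  have hc0 : 0 < c := by positivity
  set δ := min 1 (π / |d|) with hδ
  have hδ0 : 0 < δ := lt_min one_pos (by positivity)
  refine ⟨4 * Real.exp (c * δ ^ 2) * expSum (c * δ ^ 2 / 4), ?_, fun N y hy a => ?_⟩
  · have := expSum_pos (c := c * δ ^ 2 / 4) (by positivity)
    positivity
  refine concentration_of_charFun (p := fun x : Fin N → X => ∏ n, p (y n) (x n))
    (V := fun x => ∑ n, v (y n) (x n))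
    (fun x => Finset.prod_nonneg fun n _ => hp _ _) hc0 hδ0 (min_le_left _ _) _ ?_ a
  intro t ht
  have hprod : ∑ x : Fin N → X, ((∏ n, p (y n) (x n) : ℝ) : ℂ) *
      Complex.exp ((t * ∑ n, v (y n) (x n) : ℝ) * Complex.I) =
      ∏ n, ∑ x, (p (y n) x : ℂ) * Complex.exp ((t * v (y n) x : ℝ) * Complex.I) := by
    rw [← sum_prod_pi (fun n x => (p (y n) x : ℂ) *
      Complex.exp ((t * v (y n) x : ℝ) * Complex.I))]
    refine Finset.sum_congr rfl fun x _ => ?_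
    rw [Finset.prod_mul_distrib, ← Complex.exp_sum]
    push_cast
    rw [Finset.mul_sum, Finset.sum_mul]
  rw [hprod, norm_prod, count]
  simp only [Nat.cast_sum, Nat.cast_ite, Nat.cast_one, Nat.cast_zero]
  rw [Finset.mul_sum, Real.exp_sum]
  refine Finset.prod_le_prod (fun n _ => norm_nonneg _) fun n _ => ?_
  split_ifs with hn
  · rw [hn, mul_one]
    have htd : |t * (v b x₁ - v b x₂)| ≤ π := by
      rw [abs_mul, ← le_div_iff₀ hd1]
      exact ht.trans (min_le_right _ _)
    have hpb : ∑ x, p b x = 1 := hn ▸ hy n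
    exact norm_sum_mul_exp_le_exp (p := p b) (v := v b) (q := q) (t := t) (hp b) hpb hne
      (min_le_left _ _) (min_le_right _ _) hq0.le htd
  · rw [mul_zero, Real.exp_zero, ← hy n]
    refine (norm_sum_le _ _).trans (Finset.sum_le_sum fun x _ => ?_)
    rw [norm_mul, Complex.norm_exp_ofReal_mul_I, mul_one, Complex.norm_real,
      Real.norm_of_nonneg (hp _ _)]

theorem exp_mul_min_le {s ρ κ V b : ℝ} (h1 : κ ≤ s * ρ) (h2 : κ ≤ s * (1 - ρ)) :
    Real.exp (ρ * s * V) * min 1 (Real.exp (s * b) * Real.exp (-s * V)) ≤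
      Real.exp (ρ * s * b) * Real.exp (-κ * |V - b|) := by
  rw [← Real.exp_add, ← Real.exp_add]
  rcases le_total b V with h | h
  · refine (mul_le_mul_of_nonneg_left (min_le_right _ _) (Real.exp_pos _).le).trans ?_
    rw [← Real.exp_add, abs_of_nonneg (by linarith)]
    refine Real.exp_le_exp.mpr ?_
    nlinarith
  · refine (mul_le_mul_of_nonneg_left (min_le_left _ _) (Real.exp_pos _).le).trans ?_
    rw [mul_one, abs_of_nonpos (by linarith)]
    refine Real.exp_le_exp.mpr ?_
    nlinarith

theorem sum_mul_min_le {ι : Type*} [Fintype ι] {p V P U : ι → ℝ} {Γ D s ρ K : ℝ}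
    (hp : ∀ x, 0 ≤ p x) (hU : ∀ x, 0 ≤ U x)
    (hΓ : 0 < Γ) (hD : 0 < D) (hK : 0 < K) (hs : 0 < s) (hρ : 0 < ρ) (hρ1 : ρ < 1)
    (hconc : ∀ a : ℝ, ∑ x, (if a ≤ V x ∧ V x ≤ a + 1 then p x else 0) ≤ D)
    (hPU : ∀ x, P x * U x = Γ * p x * Real.exp (ρ * s * V x))
    (hPz : ∀ x, 0 < U x → P x = Γ * p x * Real.exp (-s * V x))
    (hVU : ∀ x, 0 < U x → V x = Real.log (U x)) :
    ∑ x, P x * U x * min 1 (K * ∑ z, P z * if U x ≤ U z then 1 else 0) ≤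
      ((Real.exp s * expSum s) ^ ρ *
        (Real.exp (min (s * ρ) (s * (1 - ρ))) * expSum (min (s * ρ) (s * (1 - ρ))))) *
        K ^ ρ * Γ ^ (1 + ρ) * D ^ (1 + ρ) := by
  set κ := min (s * ρ) (s * (1 - ρ)) with hκ
  have hκ0 : 0 < κ := lt_min (by positivity) (mul_pos hs (by linarith))
  set E₁ := Real.exp s * expSum s
  set E₂ := Real.exp κ * expSum κ
  have hE₁ : 0 < E₁ := mul_pos (Real.exp_pos _) (expSum_pos hs)
  set τ := K * Γ * D * E₁ with hτ
  have hτ0 : 0 < τ := by positivity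
  set b := Real.log τ / s with hb
  have hτb : τ = Real.exp (s * b) := by
    rw [hb, mul_div_cancel₀ _ hs.ne', Real.exp_log hτ0]
  have hτρ : τ ^ ρ = Real.exp (ρ * s * b) := by
    rw [hτb, ← Real.exp_mul]; ring_nf
  have hpair : ∀ x, 0 < U x →
      K * ∑ z, P z * (if U x ≤ U z then 1 else 0) ≤ Real.exp (s * b) * Real.exp (-s * V x) := by
    intro x hx
    have : ∑ z, P z * (if U x ≤ U z then 1 else 0) ≤
        Γ * Real.exp (-s * V x) * ∑ z, p z * Real.exp (-s * |V z - V x|) := by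
      rw [Finset.mul_sum]
      refine Finset.sum_le_sum fun z _ => ?_
      split_ifs with h
      · have hz := hx.trans_le h
        have hV : V x ≤ V z := by
          rw [hVU x hx, hVU z hz]
          exact Real.log_le_log hx h
        rw [hPz z hz, abs_of_nonneg (by linarith)]
        have : Real.exp (-s * V z) = Real.exp (-s * V x) * Real.exp (-s * (V z - V x)) := by
          rw [← Real.exp_add]; ring_nf
        rw [this]
        exact le_of_eq (by ring)
      · have := hp z
        rw [mul_zero]
        positivity
    calc _ ≤ K * (Γ * Real.exp (-s * V x) * (D * E₁)) := by
          refine mul_le_mul_of_nonneg_left (this.trans ?_) hK.le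
          exact mul_le_mul_of_nonneg_left
            (sum_exp_abs_le_of_concentration hs hp hconc _) (by positivity)
      _ = _ := by rw [← hτb, hτ]; ring
  calc _ ≤ ∑ x, Γ * τ ^ ρ * (p x * Real.exp (-κ * |V x - b|)) := by
        refine Finset.sum_le_sum fun x _ => ?_
        rcases (hU x).eq_or_lt with h0 | h0
        · rw [← h0, mul_zero, zero_mul]
          have := hp x
          positivity
        · rw [hPU, hτρ]
          have h3 : Real.exp (ρ * s * V x) *
              min 1 (K * ∑ z, P z * if U x ≤ U z then 1 else 0) ≤
              Real.exp (ρ * s * b) * Real.exp (-κ * |V x - b|) :=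
            le_trans (mul_le_mul_of_nonneg_left (min_le_min_left _ (hpair x h0))
              (Real.exp_pos _).le) (exp_mul_min_le (min_le_left _ _) (min_le_right _ _))
          have := mul_le_mul_of_nonneg_left h3 (mul_nonneg hΓ.le (hp x))
          linarith
    _ = Γ * τ ^ ρ * ∑ x, p x * Real.exp (-κ * |V x - b|) := by rw [Finset.mul_sum]
    _ ≤ Γ * τ ^ ρ * (D * E₂) := mul_le_mul_of_nonneg_left
        (sum_exp_abs_le_of_concentration hκ0 hp hconc _) (by positivity)
    _ = _ := by
        rw [hτ, Real.mul_rpow (by positivity) hE₁.le, Real.mul_rpow (by positivity) hD.le,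
          Real.mul_rpow hK.le hΓ.le, Real.rpow_add hΓ, Real.rpow_add hD, Real.rpow_one,
          Real.rpow_one]
        ring

set_option maxHeartbeats 1600000 in
theorem exists_ensemble_bound {X Y : Type*} [Fintype X] [Fintype Y]
    {W : X → Y → ℝ} (hW : IsChannel W) {Q : X → ℝ} (hQ : IsDist Q) (hns : ¬ Singular W Q)
    {ρ : ℝ} (hρ : 0 < ρ) (hρ1 : ρ < 1) :
    ∃ C : ℝ, 0 < C ∧ ∀ (N : ℕ) (K : ℝ), 0 < K →
      ∑ x : Fin N → X, (∏ n, Q (x n)) * ∑ y : Fin N → Y, Wn W x y *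
        min 1 (K * ∑ z : Fin N → X, (∏ n, Q (z n)) * if Wn W x y ≤ Wn W z y then 1 else 0) ≤
      C * K ^ ρ * ((N : ℝ) + 1) ^ (-(1 + ρ) / 2) * Real.exp (-(N : ℝ) * Eo W ρ Q) := by
  obtain ⟨x₁, b, x₂, hpos, hne⟩ : ∃ x y z, 0 < Q x * W x y * (Q z * W z y) ∧ W x y ≠ W z y := by
    simpa [Singular] using hns
  have hWnn := hW.1
  have hQnn := hQ.1
  have hWn : ∀ {N : ℕ} (x : Fin N → X) (y : Fin N → Y), 0 ≤ Wn W x y :=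
    fun x y => Finset.prod_nonneg fun n _ => hW.1 _ _
  have hqw1 : 0 < Q x₁ * W x₁ b := lt_of_le_of_ne (mul_nonneg (hQnn _) (hWnn _ _))
    (fun h => by simp [← h] at hpos)
  have hqw2 : 0 < Q x₂ * W x₂ b := lt_of_le_of_ne (mul_nonneg (hQnn _) (hWnn _ _))
    (fun h => by simp [← h] at hpos)
  have hw1 : 0 < W x₁ b := pos_of_mul_pos_right hqw1 (hQnn _)
  have hw2 : 0 < W x₂ b := pos_of_mul_pos_right hqw2 (hQnn _)
  have hq1 : 0 < Q x₁ := pos_of_mul_pos_left hqw1 (hWnn _ _)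
  have hq2 : 0 < Q x₂ := pos_of_mul_pos_left hqw2 (hWnn _ _)
  obtain ⟨s, hs⟩ : ∃ s : ℝ, s = 1 / (1 + ρ) := ⟨_, rfl⟩
  have hs0 : 0 < s := by rw [hs]; positivity
  have hsρ : s + ρ * s = 1 := by rw [hs]; field_simp
  set w : X → Y → ℝ := fun x y => Q x * W x y ^ s with hw
  have hw0 : ∀ x y, 0 ≤ w x y := fun x y => mul_nonneg (hQnn x) (Real.rpow_nonneg (hWnn x y) _)
  set G : Y → ℝ := fun y => ∑ x, w x y with hG
  have hG0 : ∀ y, 0 ≤ G y := fun y => Finset.sum_nonneg fun x _ => hw0 x y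
  have hGb : 0 < G b := Finset.sum_pos' (fun x _ => hw0 x b)
    ⟨x₁, Finset.mem_univ _, mul_pos hq1 (Real.rpow_pos_of_pos hw1 _)⟩
  set Φ : ℝ := ∑ y, G y ^ (1 + ρ) with hΦ
  have hΦ0 : 0 < Φ := Finset.sum_pos' (fun y _ => Real.rpow_nonneg (hG0 y) _)
    ⟨b, Finset.mem_univ _, Real.rpow_pos_of_pos hGb _⟩
  have hEo : Eo W ρ Q = -Real.log Φ := by
    simp only [Eo, hΦ, hG, hw, hs]
  set p : Y → X → ℝ := fun y x => w x y / G y with hp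
  have hp0 : ∀ y x, 0 ≤ p y x := fun y x => div_nonneg (hw0 x y) (hG0 y)
  obtain ⟨D, hD, hconc⟩ := exists_concentration (p := p)
    (v := fun y x => Real.log (W x y)) hp0 (b := b) (x₁ := x₁) (x₂ := x₂)
    (div_pos (mul_pos hq1 (Real.rpow_pos_of_pos hw1 _)) hGb)
    (div_pos (mul_pos hq2 (Real.rpow_pos_of_pos hw2 _)) hGb)
    (fun h => hne (Real.log_injOn_pos hw1 hw2 h))
  set f : Y → ℝ := fun y => G y ^ (1 + ρ) / Φ with hf
  have hf0 : ∀ y, 0 ≤ f y := fun y => div_nonneg (Real.rpow_nonneg (hG0 y) _) hΦ0.le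
  have hf1 : ∑ y, f y = 1 := by
    rw [← Finset.sum_div]; exact div_self hΦ0.ne'
  have hfb : 0 < f b := div_pos (Real.rpow_pos_of_pos hGb _) hΦ0
  set C₀ := (Real.exp s * expSum s) ^ ρ *
        (Real.exp (min (s * ρ) (s * (1 - ρ))) * expSum (min (s * ρ) (s * (1 - ρ)))) with hC₀
  have hC₀0 : 0 < C₀ := by
    have h1 := expSum_pos hs0
    have h2 := expSum_pos (c := min (s * ρ) (s * (1 - ρ)))
      (lt_min (by positivity) (mul_pos hs0 (by linarith)))
    positivity
  have hα : -(1 + ρ) / 2 = -((1 + ρ) / 2) := by ring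
  refine ⟨C₀ * D ^ (1 + ρ) * f b ^ (-((1 + ρ) / 2)), by positivity, fun N K hK => ?_⟩
  have hinner : ∀ y : Fin N → Y, ∑ x : Fin N → X, (∏ n, Q (x n)) * Wn W x y *
      min 1 (K * ∑ z : Fin N → X, (∏ n, Q (z n)) * if Wn W x y ≤ Wn W z y then 1 else 0) ≤
      C₀ * K ^ ρ * D ^ (1 + ρ) * Φ ^ N *
        ((∏ n, f (y n)) * ((count b y : ℝ) + 1) ^ (-((1 + ρ) / 2))) := by
    intro y
    have hletter : ∀ x y, Q x * W x y = w x y * Real.exp (ρ * s * Real.log (W x y)) := by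
      intro x y
      rcases (hWnn x y).eq_or_lt with h | h
      · simp [hw, ← h, Real.zero_rpow hs0.ne']
      · simp only [hw]
        rw [mul_comm (ρ * s), ← Real.rpow_def_of_pos h, mul_assoc, ← Real.rpow_add h, hsρ,
          Real.rpow_one]
    have hletter' : ∀ x y, 0 < W x y → Q x = w x y * Real.exp (-s * Real.log (W x y)) := by
      intro x y h
      simp only [hw]
      rw [mul_comm (-s), ← Real.rpow_def_of_pos h, mul_assoc, ← Real.rpow_add h]
      simp
    by_cases hy : ∀ n, 0 < G (y n)
    · have hΓ : 0 < ∏ n, G (y n) := Finset.prod_pos fun n _ => hy n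
      have hwp : ∀ x : Fin N → X, ∏ n, w (x n) (y n) =
          (∏ n, G (y n)) * ∏ n, p (y n) (x n) := by
        intro x
        rw [← Finset.prod_mul_distrib]
        exact Finset.prod_congr rfl fun n _ => by
          simp only [hp]; rw [mul_div_cancel₀ _ (hy n).ne']
      have hcount : (0 : ℝ) < (count b y : ℝ) + 1 := by positivity
      have hmain := sum_mul_min_le (ι := Fin N → X) (p := fun x => ∏ n, p (y n) (x n))
        (V := fun x => ∑ n, Real.log (W (x n) (y n))) (P := fun x => ∏ n, Q (x n))
        (U := fun x => Wn W x y) (Γ := ∏ n, G (y n)) (D := D / √((count b y : ℝ) + 1))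
        (s := s) (ρ := ρ) (K := K) (fun x => Finset.prod_nonneg fun n _ => hp0 _ _)
        (fun x => hWn x y) hΓ (by positivity) hK hs0 hρ hρ1
        (hconc N y fun n => by
          simp only [hp]; rw [← Finset.sum_div]; exact div_self (hy n).ne')
        (fun x => by
          rw [← hwp, Finset.mul_sum, Real.exp_sum, ← Finset.prod_mul_distrib, Wn,
            ← Finset.prod_mul_distrib]
          exact Finset.prod_congr rfl fun n _ => hletter _ _)
        (fun x hx => by
          rw [← hwp, Finset.mul_sum, Real.exp_sum, ← Finset.prod_mul_distrib]
          refine Finset.prod_congr rfl fun n _ => hletter' _ _ ?_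
          refine (hWnn _ _).lt_of_ne fun h => hx.ne' ?_
          exact Finset.prod_eq_zero (Finset.mem_univ n) h.symm)
        (fun x hx => by
          rw [Wn, Real.log_prod fun n _ h => hx.ne' (Finset.prod_eq_zero (Finset.mem_univ n) h)])
      refine hmain.trans (le_of_eq ?_)
      have e1 : (D / √((count b y : ℝ) + 1)) ^ (1 + ρ) =
          D ^ (1 + ρ) * ((count b y : ℝ) + 1) ^ (-((1 + ρ) / 2)) := by
        rw [Real.div_rpow hD.le (Real.sqrt_nonneg _), Real.sqrt_eq_rpow,
          ← Real.rpow_mul hcount.le, div_eq_mul_inv, ← Real.rpow_neg hcount.le]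
        congr 2
        ring
      have e2 : (∏ n, G (y n)) ^ (1 + ρ) = Φ ^ N * ∏ n, f (y n) := by
        simp only [hf, Finset.prod_div_distrib, Finset.prod_const, Finset.card_univ,
          Fintype.card_fin]
        rw [mul_div_cancel₀ _ (by positivity),
          ← Real.finsetProd_rpow _ _ fun n _ => hG0 (y n)]
      rw [e1, e2]
      ring
    · push Not at hy
      obtain ⟨n, hn⟩ := hy
      have hz : ∀ x, w x (y n) = 0 := fun x =>
        (Finset.sum_eq_zero_iff_of_nonneg fun x _ => hw0 x (y n)).mp
          (le_antisymm hn (hG0 _)) x (Finset.mem_univ x)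
      refine le_trans (le_of_eq (Finset.sum_eq_zero fun x _ => ?_)) ?_
      · have : (∏ n, Q (x n)) * Wn W x y = 0 := by
          rw [Wn, ← Finset.prod_mul_distrib]
          refine Finset.prod_eq_zero (Finset.mem_univ n) ?_
          rw [hletter, hz, zero_mul]
        rw [this, zero_mul]
      · have := Finset.prod_nonneg (s := Finset.univ) fun n _ => hf0 (y n)
        positivity
  calc _ = ∑ y : Fin N → Y, ∑ x : Fin N → X, (∏ n, Q (x n)) * Wn W x y *
      min 1 (K * ∑ z : Fin N → X, (∏ n, Q (z n)) * if Wn W x y ≤ Wn W z y then 1 else 0) := by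
        refine Eq.trans (Finset.sum_congr rfl fun x _ => ?_) Finset.sum_comm
        rw [Finset.mul_sum]
        exact Finset.sum_congr rfl fun y _ => (mul_assoc _ _ _).symm
    _ ≤ ∑ y : Fin N → Y, C₀ * K ^ ρ * D ^ (1 + ρ) * Φ ^ N *
        ((∏ n, f (y n)) * ((count b y : ℝ) + 1) ^ (-((1 + ρ) / 2))) :=
        Finset.sum_le_sum fun y _ => hinner y
    _ ≤ C₀ * K ^ ρ * D ^ (1 + ρ) * Φ ^ N * (((N : ℝ) + 1) * f b) ^ (-((1 + ρ) / 2)) := by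
        rw [← Finset.mul_sum]
        refine mul_le_mul_of_nonneg_left ?_ (by positivity)
        exact sum_prod_mul_count_rpow_le hf0 hf1 hfb N (by positivity) (by linarith)
    _ = _ := by
        rw [hEo, hα, Real.mul_rpow (by positivity) hfb.le, neg_mul_neg, mul_comm (N : ℝ),
          Real.exp_mul, Real.exp_log hΦ0, Real.rpow_natCast]
        ring

section Exponents

variable {X Y : Type*} [Fintype X] [Fintype Y] {W : X → Y → ℝ} {Q : X → ℝ}

theorem exists_inv_card_le_output [Nonempty Y] (hW : IsChannel W) (hQ : IsDist Q) :
    ∃ y, (Fintype.card Y : ℝ)⁻¹ ≤ ∑ x, Q x * W x y := by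
  have h : ∑ y, ∑ x, Q x * W x y = 1 := by
    rw [Finset.sum_comm]
    simp_rw [← Finset.mul_sum, hW.2, mul_one]
    exact hQ.2
  obtain ⟨y, -, hy⟩ := Finset.exists_le_of_sum_le (s := Finset.univ)
    (f := fun _ : Y => (Fintype.card Y : ℝ)⁻¹) (g := fun y => ∑ x, Q x * W x y)
    Finset.univ_nonempty (by rw [h]; simp)
  exact ⟨y, hy⟩

theorem channel_le_one (hW : IsChannel W) (x : X) (y : Y) : W x y ≤ 1 := by
  rw [← hW.2 x]
  exact Finset.single_le_sum (fun y _ => hW.1 x y) (Finset.mem_univ y)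

theorem inv_card_sq_le_gallager_sum [Nonempty Y] (hW : IsChannel W) (hQ : IsDist Q) {ρ : ℝ}
    (h0 : 0 ≤ ρ) (h1 : ρ ≤ 1) :
    ((Fintype.card Y : ℝ)⁻¹) ^ 2 ≤ ∑ y, (∑ x, Q x * W x y ^ (1 / (1 + ρ))) ^ (1 + ρ) := by
  obtain ⟨y, hy⟩ := exists_inv_card_le_output hW hQ
  have hnn : ∀ y, 0 ≤ ∑ x, Q x * W x y ^ (1 / (1 + ρ)) := fun y =>
    Finset.sum_nonneg fun x _ => mul_nonneg (hQ.1 x) (Real.rpow_nonneg (hW.1 x y) _)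
  have hcard : (1 : ℝ) ≤ Fintype.card Y := by exact_mod_cast Fintype.card_pos
  calc ((Fintype.card Y : ℝ)⁻¹) ^ 2 = ((Fintype.card Y : ℝ)⁻¹) ^ (2 : ℝ) := by norm_cast
    _ ≤ ((Fintype.card Y : ℝ)⁻¹) ^ (1 + ρ) :=
        Real.rpow_le_rpow_of_exponent_ge (by positivity) (inv_le_one_of_one_le₀ hcard)
          (by linarith)
    _ ≤ (∑ x, Q x * W x y ^ (1 / (1 + ρ))) ^ (1 + ρ) := by
        refine Real.rpow_le_rpow (by positivity) (hy.trans ?_) (by linarith)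
        refine Finset.sum_le_sum fun x _ => mul_le_mul_of_nonneg_left ?_ (hQ.1 x)
        refine Real.self_le_rpow_of_le_one (hW.1 x y) (channel_le_one hW x y) ?_
        rw [div_le_one (by linarith)]
        linarith
    _ ≤ _ := Finset.single_le_sum (f := fun y => (∑ x, Q x * W x y ^ (1 / (1 + ρ))) ^ (1 + ρ))
        (fun y _ => Real.rpow_nonneg (hnn y) _) (Finset.mem_univ y)

theorem gallager_sum_pos [Nonempty Y] (hW : IsChannel W) (hQ : IsDist Q) {ρ : ℝ}
    (h0 : 0 ≤ ρ) (h1 : ρ ≤ 1) :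
    0 < ∑ y, (∑ x, Q x * W x y ^ (1 / (1 + ρ))) ^ (1 + ρ) :=
  lt_of_lt_of_le (by positivity) (inv_card_sq_le_gallager_sum hW hQ h0 h1)

theorem Eo_le [Nonempty Y] (hW : IsChannel W) (hQ : IsDist Q) {ρ : ℝ}
    (h0 : 0 ≤ ρ) (h1 : ρ ≤ 1) : Eo W ρ Q ≤ 2 * Real.log (Fintype.card Y) := by
  have h := Real.log_le_log (by positivity) (inv_card_sq_le_gallager_sum hW hQ h0 h1)
  rw [Real.log_pow, Real.log_inv] at h
  rw [Eo]
  push_cast at h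
  linarith

theorem Eo_zero (hW : IsChannel W) (hQ : IsDist Q) : Eo W 0 Q = 0 := by
  have h : ∑ y, ∑ x, Q x * W x y = 1 := by
    rw [Finset.sum_comm]
    simp_rw [← Finset.mul_sum, hW.2, mul_one]
    exact hQ.2
  simp [Eo, h]

theorem continuousOn_Eo [Nonempty Y] (hW : IsChannel W) (hQ : IsDist Q) :
    ContinuousOn (fun ρ => Eo W ρ Q) (Set.Icc 0 1) := by
  have hne : ∀ ρ ∈ Set.Icc (0 : ℝ) 1, 1 + ρ ≠ 0 := fun ρ hρ => by linarith [hρ.1]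
  refine (ContinuousOn.log ?_ fun ρ hρ => (gallager_sum_pos hW hQ hρ.1 hρ.2).ne').neg
  refine continuousOn_finsetSum _ fun y _ => ?_
  refine ContinuousOn.rpow ?_ (by fun_prop) fun ρ hρ => Or.inr (by linarith [hρ.1])
  refine continuousOn_finsetSum _ fun x _ => continuousOn_const.mul ?_
  refine ContinuousOn.rpow continuousOn_const ?_ fun ρ hρ =>
    Or.inr (div_pos one_pos (by linarith [hρ.1]))
  exact continuousOn_const.div (by fun_prop) hne

theorem bddAbove_ErQ [Nonempty Y] (hW : IsChannel W) (hQ : IsDist Q) (R : ℝ) :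
    BddAbove ((fun ρ => -ρ * R + Eo W ρ Q) '' Set.Icc (0 : ℝ) 1) := by
  refine ⟨|R| + 2 * Real.log (Fintype.card Y), ?_⟩
  rintro _ ⟨ρ, hρ, rfl⟩
  have h := Eo_le hW hQ hρ.1 hρ.2
  have : -ρ * R ≤ |R| := by
    have := neg_abs_le R
    nlinarith [hρ.1, hρ.2, abs_nonneg R, mul_le_mul_of_nonneg_left this hρ.1]
  simp only
  linarith

theorem le_ErQ [Nonempty Y] (hW : IsChannel W) (hQ : IsDist Q) (R : ℝ) {ρ : ℝ}
    (h0 : 0 ≤ ρ) (h1 : ρ ≤ 1) : -ρ * R + Eo W ρ Q ≤ ErQ W R Q :=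
  le_csSup (bddAbove_ErQ hW hQ R) ⟨ρ, ⟨h0, h1⟩, rfl⟩

theorem exists_ErQ_eq [Nonempty Y] (hW : IsChannel W) (hQ : IsDist Q) (R : ℝ) :
    ∃ ρ, 0 ≤ ρ ∧ ρ ≤ 1 ∧ ErQ W R Q = -ρ * R + Eo W ρ Q := by
  have hc : ContinuousOn (fun ρ => -ρ * R + Eo W ρ Q) (Set.Icc 0 1) :=
    ContinuousOn.add (by fun_prop) (continuousOn_Eo hW hQ)
  obtain ⟨ρ, hρ, h⟩ := isCompact_Icc.exists_sSup_image_eq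
    (Set.nonempty_Icc.mpr zero_le_one) hc
  exact ⟨ρ, hρ.1, hρ.2, h⟩

theorem bddAbove_Er [Nonempty Y] (hW : IsChannel W) (R : ℝ) :
    BddAbove {v : ℝ | ∃ Q : X → ℝ, IsDist Q ∧ v = ErQ W R Q} := by
  refine ⟨|R| + 2 * Real.log (Fintype.card Y), ?_⟩
  rintro _ ⟨Q, hQ, rfl⟩
  obtain ⟨ρ, h0, h1, h⟩ := exists_ErQ_eq hW hQ R
  have h2 := Eo_le hW hQ h0 h1
  have : -ρ * R ≤ |R| := by
    have := neg_abs_le R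
    nlinarith [abs_nonneg R, mul_le_mul_of_nonneg_left this h0]
  linarith

theorem ErQ_le_Er [Nonempty Y] (hW : IsChannel W) (hQ : IsDist Q) (R : ℝ) :
    ErQ W R Q ≤ Er W R :=
  le_csSup (bddAbove_Er hW R) ⟨Q, hQ, rfl⟩

theorem bddAbove_Eo_one [Nonempty Y] (hW : IsChannel W) :
    BddAbove {v : ℝ | ∃ Q : X → ℝ, IsDist Q ∧ v = Eo W 1 Q} := by
  refine ⟨2 * Real.log (Fintype.card Y), ?_⟩
  rintro _ ⟨Q, hQ, rfl⟩
  exact Eo_le hW hQ zero_le_one le_rfl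

theorem exists_isDist (X : Type*) [Fintype X] [Nonempty X] : ∃ Q : X → ℝ, IsDist Q := by
  obtain ⟨a⟩ := ‹Nonempty X›
  refine ⟨fun x => if x = a then 1 else 0, fun x => ?_, by simp⟩
  simp only
  split_ifs <;> norm_num

theorem Er_le_add_abs [Nonempty X] [Nonempty Y] (hW : IsChannel W) (R x : ℝ) :
    Er W x ≤ Er W R + |x - R| := by
  obtain ⟨Q₀, hQ₀⟩ := exists_isDist X
  refine csSup_le ⟨_, Q₀, hQ₀, rfl⟩ ?_
  rintro _ ⟨Q, hQ, rfl⟩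
  obtain ⟨ρ, h0, h1, h⟩ := exists_ErQ_eq hW hQ x
  have h2 := (le_ErQ hW hQ R h0 h1).trans (ErQ_le_Er hW hQ R)
  have := neg_abs_le (x - R)
  rw [h]
  nlinarith [abs_nonneg (x - R), mul_le_mul_of_nonneg_left this h0]

theorem bddAbove_abs_Subderiv_Er [Nonempty X] [Nonempty Y] (hW : IsChannel W) (R : ℝ) :
    BddAbove ((fun g => |g|) '' Subderiv (Er W) R) := by
  refine ⟨1, ?_⟩
  rintro _ ⟨g, hg, rfl⟩
  have h1 := (hg (R + 1)).trans (Er_le_add_abs hW R (R + 1))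
  have h2 := (hg (R - 1)).trans (Er_le_add_abs hW R (R - 1))
  simp only [add_sub_cancel_left, sub_sub_cancel_left, abs_one, abs_neg] at h1 h2
  exact abs_le.mpr ⟨by linarith, by linarith⟩

theorem hasDerivAt_rpow_one_div {a : ℝ} (ha : 0 ≤ a) :
    HasDerivAt (fun ρ : ℝ => a ^ (1 / (1 + ρ))) (-(a * Real.log a)) 0 := by
  rcases ha.eq_or_lt with rfl | ha
  · have : (fun ρ : ℝ => (0 : ℝ) ^ (1 / (1 + ρ))) =ᶠ[nhds 0] fun _ => 0 := by
      filter_upwards [lt_mem_nhds (show (-1 : ℝ) < 0 by norm_num)] with ρ hρ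
      exact Real.zero_rpow (div_pos one_pos (by linarith)).ne'
    simpa using (hasDerivAt_const (0 : ℝ) (0 : ℝ)).congr_of_eventuallyEq this
  · have h1 : HasDerivAt (fun ρ : ℝ => 1 / (1 + ρ)) (-1) 0 := by
      have := ((hasDerivAt_id (0 : ℝ)).const_add 1).fun_inv (by norm_num)
      simpa [one_div] using this
    refine (h1.const_rpow ha).congr_deriv ?_
    simp [mul_comm]

theorem hasDerivAt_gallager_term (hW : IsChannel W) (hQ : IsDist Q) (y : Y) :
    HasDerivAt (fun ρ : ℝ => (∑ x, Q x * W x y ^ (1 / (1 + ρ))) ^ (1 + ρ))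
      (-(∑ x, Q x * W x y * Real.log (W x y / ∑ x', Q x' * W x' y))) 0 := by
  set q := ∑ x, Q x * W x y with hq
  have hnn : ∀ x, 0 ≤ Q x * W x y := fun x => mul_nonneg (hQ.1 x) (hW.1 x y)
  have hq0 : 0 ≤ q := Finset.sum_nonneg fun x _ => hnn x
  rcases hq0.eq_or_lt with h0 | h0
  · have hz : ∀ x, Q x * W x y = 0 := fun x =>
      (Finset.sum_eq_zero_iff_of_nonneg fun x _ => hnn x).mp h0.symm x (Finset.mem_univ x)
    have : (fun ρ : ℝ => (∑ x, Q x * W x y ^ (1 / (1 + ρ))) ^ (1 + ρ)) =ᶠ[nhds 0]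
        fun _ => 0 := by
      filter_upwards [lt_mem_nhds (show (-1 : ℝ) < 0 by norm_num)] with ρ hρ
      have h1 : (0 : ℝ) < 1 + ρ := by linarith
      have : ∑ x, Q x * W x y ^ (1 / (1 + ρ)) = 0 := Finset.sum_eq_zero fun x _ => by
        rcases mul_eq_zero.mp (hz x) with h | h
        · simp [h]
        · rw [h, Real.zero_rpow (div_pos one_pos h1).ne', mul_zero]
      rw [this, Real.zero_rpow h1.ne']
    have hd := (hasDerivAt_const (0 : ℝ) (0 : ℝ)).congr_of_eventuallyEq this
    simpa [hz] using hd
  · have hg : HasDerivAt (fun ρ : ℝ => ∑ x, Q x * W x y ^ (1 / (1 + ρ)))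
        (∑ x, Q x * -(W x y * Real.log (W x y))) 0 :=
      HasDerivAt.fun_sum fun x _ => (hasDerivAt_rpow_one_div (hW.1 x y)).const_mul (Q x)
    refine (hg.rpow ((hasDerivAt_id (0 : ℝ)).const_add 1)
      (by simpa [← hq] using h0)).congr_deriv ?_
    simp only [id, add_zero, div_one, Real.rpow_one, sub_self, Real.rpow_zero, mul_one, one_mul,
      ← hq]
    have : ∀ x, Q x * W x y * Real.log (W x y / q) =
        -(Q x * -(W x y * Real.log (W x y))) - Q x * W x y * Real.log q := by
      intro x
      rcases (hW.1 x y).eq_or_lt with h | h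
      · simp [← h]
      · rw [Real.log_div h.ne' h0.ne']; ring
    simp_rw [this]
    rw [Finset.sum_sub_distrib, ← Finset.sum_mul, ← hq, Finset.sum_neg_distrib]
    ring

theorem hasDerivAt_Eo_zero (hW : IsChannel W) (hQ : IsDist Q) :
    HasDerivAt (fun ρ => Eo W ρ Q) (MI W Q) 0 := by
  have h1 : ∑ y, (∑ x, Q x * W x y ^ (1 / (1 + (0 : ℝ)))) ^ (1 + (0 : ℝ)) = 1 := by
    simp only [add_zero, div_one, Real.rpow_one]
    rw [Finset.sum_comm]
    simp_rw [← Finset.mul_sum, hW.2, mul_one]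
    exact hQ.2
  have hs := HasDerivAt.fun_sum (u := Finset.univ)
    fun y (_ : y ∈ Finset.univ) => hasDerivAt_gallager_term hW hQ y
  refine (hs.log (by rw [h1]; exact one_ne_zero)).fun_neg.congr_deriv ?_
  rw [h1, div_one, Finset.sum_neg_distrib, neg_neg, MI, Finset.sum_comm]

theorem Er_pos [Nonempty X] [Nonempty Y] (hW : IsChannel W) {R : ℝ} (hR : R < Capacity W) :
    0 < Er W R := by
  obtain ⟨Q₀, hQ₀⟩ := exists_isDist X
  obtain ⟨_, ⟨Q, hQ, rfl⟩, hlt⟩ := exists_lt_of_lt_csSup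
    (s := {v : ℝ | ∃ Q : X → ℝ, IsDist Q ∧ v = MI W Q}) ⟨_, Q₀, hQ₀, rfl⟩ hR
  have hd := (hasDerivAt_Eo_zero hW hQ).hasDerivWithinAt (s := Set.Ioi 0)
  rw [hasDerivWithinAt_iff_tendsto_slope' (by simp)] at hd
  have hev := hd.eventually (lt_mem_nhds hlt)
  have h1 : ∀ᶠ ρ : ℝ in nhdsWithin 0 (Set.Ioi 0), ρ ∈ Set.Ioo (0 : ℝ) 1 :=
    Ioo_mem_nhdsGT one_pos
  obtain ⟨ρ, hρ, h0, hρ1⟩ := (hev.and h1).exists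
  rw [slope_def_field, Eo_zero hW hQ, sub_zero, sub_zero, lt_div_iff₀ h0] at hρ
  have := (le_ErQ hW hQ R h0.le hρ1.le).trans (ErQ_le_Er hW hQ R)
  linarith

theorem Er_ne_of_Rcr_lt [Nonempty X] [Nonempty Y] (hW : IsChannel W) {R : ℝ} (hR : Rcr W < R) :
    Er W R ≠ -R + sSup {v : ℝ | ∃ Q : X → ℝ, IsDist Q ∧ v = Eo W 1 Q} := by
  intro h
  refine hR.not_ge (le_csSup ?_ h)
  obtain ⟨Q, hQ⟩ := exists_isDist X
  refine ⟨sSup {v : ℝ | ∃ Q : X → ℝ, IsDist Q ∧ v = Eo W 1 Q}, fun R' hR' => ?_⟩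
  have h1 := (le_ErQ hW hQ R' le_rfl zero_le_one).trans (ErQ_le_Er hW hQ R')
  rw [Eo_zero hW hQ] at h1
  have h2 : Er W R' = _ := hR'
  linarith

theorem optimal_rho_lt_one [Nonempty X] [Nonempty Y] (hW : IsChannel W) (hQ : IsDist Q) {R ρ : ℝ}
    (hR : Rcr W < R) (hρ1 : ρ ≤ 1) (h : Er W R = -ρ * R + Eo W ρ Q) : ρ < 1 := by
  refine hρ1.lt_of_ne ?_
  rintro rfl
  refine Er_ne_of_Rcr_lt hW hR (le_antisymm ?_ ?_)
  · have := le_csSup (bddAbove_Eo_one hW) ⟨Q, hQ, rfl⟩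
    linarith
  · have : sSup {v : ℝ | ∃ Q : X → ℝ, IsDist Q ∧ v = Eo W 1 Q} ≤ R + Er W R := by
      refine csSup_le ⟨_, Q, hQ, rfl⟩ ?_
      rintro _ ⟨Q', hQ', rfl⟩
      have := (le_ErQ hW hQ' R zero_le_one le_rfl).trans (ErQ_le_Er hW hQ' R)
      linarith
    linarith

theorem optimal_rho_pos [Nonempty X] [Nonempty Y] (hW : IsChannel W) (hQ : IsDist Q) {R ρ : ℝ}
    (hR : R < Capacity W) (hρ0 : 0 ≤ ρ) (h : Er W R = -ρ * R + Eo W ρ Q) : 0 < ρ := by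
  refine hρ0.lt_of_ne ?_
  rintro rfl
  have := Er_pos hW hR
  rw [h, Eo_zero hW hQ] at this
  simp at this

/-- When the slope of `E_r(·, Q)` matches the extremal slope of `E_r`, the optimizing parameter
in `E_r(R, Q)` is that slope. -/
theorem optimal_rho_eq [Nonempty X] [Nonempty Y] (hW : IsChannel W) (hQ : IsDist Q) {R ρ : ℝ}
    (hR : R < Capacity W) (hE : ErQ W R Q = Er W R)
    (hstar : rhoStarQ W Q R = sSup ((fun g => |g|) '' Subderiv (Er W) R))
    (hρ0 : 0 ≤ ρ) (hρ1 : ρ ≤ 1) (h : Er W R = -ρ * R + Eo W ρ Q) :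
    ρ = sSup ((fun g => |g|) '' Subderiv (Er W) R) := by
  by_cases hd : DifferentiableAt ℝ (fun a => ErQ W a Q) R
  · have hmin : IsLocalMin (fun a => ErQ W a Q + ρ * a) R := by
      refine Filter.Eventually.of_forall fun a => ?_
      have := le_ErQ hW hQ a hρ0 hρ1
      simp only
      rw [hE, h]
      linarith
    have h1 := hmin.hasDerivAt_eq_zero (hd.hasDerivAt.add ((hasDerivAt_id R).const_mul ρ))
    rw [← hstar, rhoStarQ]
    linarith
  · rw [rhoStarQ, deriv_zero_of_not_differentiableAt hd, neg_zero] at hstar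
    have hsub : -ρ ∈ Subderiv (Er W) R := fun x => by
      have := (le_ErQ hW hQ x hρ0 hρ1).trans (ErQ_le_Er hW hQ x)
      rw [h]
      linarith
    have hle := le_csSup (bddAbove_abs_Subderiv_Er hW R) ⟨-ρ, hsub, rfl⟩
    have hpos := optimal_rho_pos hW hQ hR hρ0 h
    beta_reduce at hle
    rw [← hstar, abs_neg, abs_of_pos hpos] at hle
    linarith

end Exponents

/-- If some nonsingular optimal `Q` attains `ρ*_R = max{|ρ| : ρ ∈ ∂E_r(R)}`,
then there is an `(N,R)` code with maximal error probability at most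
`K₅ · N^{-(1+ρ*_R)/2} · exp(-N E_r(R))`. -/
theorem statement7 {X Y : Type*} [Fintype X] [Fintype Y] [Nonempty X] [Nonempty Y]
    (W : X → Y → ℝ) (hW : IsChannel W) (hcr : Rcr W < Capacity W)
    (R : ℝ) (hR1 : Rcr W < R) (hR2 : R < Capacity W)
    (ρR : ℝ) (hρR : ρR = sSup ((fun g => |g|) '' Subderiv (Er W) R))
    (hex : ∃ Q : X → ℝ,
      IsDist Q ∧ ErQ W R Q = Er W R ∧ ¬ Singular W Q ∧ rhoStarQ W Q R = ρR) :
    ∃ K : ℝ, 0 < K ∧ ∀ N : ℕ, 0 < N →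
      ∃ (f : Fin (nMsgs N R) → Fin N → X) (φ : (Fin N → Y) → Fin (nMsgs N R)),
        Pmax W f φ ≤
          K * (N : ℝ) ^ (-(1 + ρR) / 2) * Real.exp (-(N : ℝ) * Er W R) := by
  obtain ⟨Q, hQ, hE, hns, hstar⟩ := hex
  obtain ⟨ρ, hρ0, hρ1, hopt⟩ := exists_ErQ_eq hW hQ R
  rw [hE] at hopt
  have hρeq : ρ = ρR := hρR ▸ optimal_rho_eq hW hQ hR2 hE (hstar.trans hρR) hρ0 hρ1 hopt
  have hpos := optimal_rho_pos hW hQ hR2 hρ0 hopt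
  have hlt := optimal_rho_lt_one hW hQ hR1 hρ1 hopt
  clear hρR hstar hE
  subst hρeq
  obtain ⟨C, hC, hbound⟩ := exists_ensemble_bound hW hQ hns hpos hlt
  refine ⟨2 * (C * 4), by positivity, fun N hN => ?_⟩
  obtain ⟨M, hM⟩ : ∃ M, M = nMsgs N R := ⟨_, rfl⟩
  rw [← hM]
  have hM0 : 0 < M := by
    rw [hM, nMsgs]
    exact Nat.ceil_pos.mpr (Real.exp_pos _)
  have hN0 : (0 : ℝ) < N := by exact_mod_cast hN
  rcases (Nat.succ_le_of_lt hM0).eq_or_lt with h1 | h1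
  · obtain ⟨x₀⟩ := ‹Nonempty X›
    refine ⟨fun _ _ => x₀, fun _ => ⟨0, hM0⟩, ?_⟩
    have : Subsingleton (Fin M) := by rw [← h1]; infer_instance
    have : Nonempty (Fin M) := ⟨⟨0, hM0⟩⟩
    refine le_trans (ciSup_le fun m => le_of_eq ?_) (by positivity : (0 : ℝ) ≤ _)
    refine Finset.sum_eq_zero fun y _ => ?_
    rw [if_neg (not_not.mpr (Subsingleton.elim _ _)), mul_zero]
  have hexp : (M : ℝ) < Real.exp (N * R) + 1 := by
    rw [hM, nMsgs]
    exact Nat.ceil_lt_add_one (Real.exp_pos _).le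
  have hM2 : (2 : ℝ) ≤ M := by exact_mod_cast h1
  obtain ⟨k, hk⟩ : ∃ k, 2 * M = k + 1 := ⟨2 * M - 1, by omega⟩
  have hk' : (2 : ℝ) * M = k + 1 := by exact_mod_cast hk
  have hk0 : (0 : ℝ) < k := by linarith
  have hk4 : (k : ℝ) ≤ 4 * Real.exp (N * R) := by linarith
  have hkρ : (k : ℝ) ^ ρ ≤ 4 * Real.exp (N * (ρ * R)) := by
    calc (k : ℝ) ^ ρ ≤ (4 * Real.exp (N * R)) ^ ρ := Real.rpow_le_rpow hk0.le hk4 hρ0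
      _ = 4 ^ ρ * Real.exp (N * (ρ * R)) := by
          rw [Real.mul_rpow (by norm_num) (Real.exp_pos _).le, ← Real.exp_mul]
          congr 2
          ring
      _ ≤ 4 * Real.exp (N * (ρ * R)) := by
          refine mul_le_mul_of_nonneg_right ?_ (Real.exp_pos _).le
          calc (4 : ℝ) ^ ρ ≤ 4 ^ (1 : ℝ) :=
                Real.rpow_le_rpow_of_exponent_le (by norm_num) hρ1
            _ = 4 := Real.rpow_one _
  set ε : ℝ := C * 4 * (N : ℝ) ^ (-(1 + ρ) / 2) * Real.exp (-(N : ℝ) * Er W R) with hε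
  have hε0 : 0 < ε := by positivity
  have hens : C * (k : ℝ) ^ ρ * ((N : ℝ) + 1) ^ (-(1 + ρ) / 2) *
      Real.exp (-(N : ℝ) * Eo W ρ Q) ≤ ε := by
    calc _ ≤ C * (4 * Real.exp (N * (ρ * R))) * (N : ℝ) ^ (-(1 + ρ) / 2) *
          Real.exp (-(N : ℝ) * Eo W ρ Q) := by
          refine mul_le_mul_of_nonneg_right (mul_le_mul
            (mul_le_mul_of_nonneg_left hkρ hC.le) ?_ (by positivity) (by positivity))
            (Real.exp_pos _).le
          exact Real.rpow_le_rpow_of_nonpos hN0 (by linarith) (by linarith)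
      _ = ε := by
          have : Real.exp (-(N : ℝ) * Er W R) =
              Real.exp (N * (ρ * R)) * Real.exp (-(N : ℝ) * Eo W ρ Q) := by
            rw [← Real.exp_add, hopt]
            ring_nf
          rw [hε, this]
          ring
  have hPsum : ∑ x : Fin N → X, ∏ n, Q (x n) = 1 := by
    rw [sum_prod_pi (fun _ => Q)]
    simp [hQ.2]
  obtain ⟨c, hc⟩ := exists_codebook_sum_error_le (P := fun x : Fin N → X => ∏ n, Q (x n))
    (fun x => Finset.prod_nonneg fun n _ => hQ.1 _) hPsum (U := fun x => Wn W (N := N) x)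
    (fun x y => Finset.prod_nonneg fun n _ => hW.1 _ _) k
  have hc' := hc.trans (mul_le_mul_of_nonneg_left ((hbound N k hk0).trans hens)
    (by positivity : (0 : ℝ) ≤ k + 1))
  rw [← hk'] at hc'
  clear hc
  revert c
  rw [← hk]
  intro c hc
  obtain ⟨f, φ, hfφ⟩ := exists_code_maxError_le hW.1 hM0 hε0 c hc
  exact ⟨f, φ, hfφ.trans (le_of_eq (by rw [hε]; ring))⟩

end RCB
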